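/- Let k be a field, V a finite-dimensional k-vector space, and (F^q)_{q∈ℤ} a monotone increasing family of k-subspaces of V. Regard W = k[x,x⁻¹] ⊗_k V as a module over the polynomial ring k[x] via the inclusion k[x] ⊆ k[x,x⁻¹], and let Rees(F) ⊆ W be the k[x]-submodule generated by all elements x^q ⊗ v with q ∈ ℤ and v ∈ F^q. For a linear functional α ∈ V* and an integer p, let α̃_p : W → k[x,x⁻¹] be the k[x,x⁻¹]-linear map determined by f ⊗ v ↦ x^p · f · α(v). Then α̃_p maps Rees(F) into the subring k[x] if and only if α annihilates F^q for every integer q < −p; equivalently (using monotonicity), if and only if α lies in the dual annihilator of F^{−p−1}. -/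

import Mathlib

open Polynomial LaurentPolynomial TensorProduct

/-- The algebra maps `k → k[x] → k[x,x⁻¹]` form a scalar tower. -/
instance laurentTower (k : Type*) [CommRing k] :
    IsScalarTower k (Polynomial k) (LaurentPolynomial k) :=
  IsScalarTower.of_algebraMap_eq fun c => by
    simp [algebraMap_eq_toLaurent, Polynomial.algebraMap_apply]

/-!
The Rees module is generated by the `x^q ⊗ v` with `v ∈ F^q`, so a `k[x]`-linear map takes it into
`k[x]` as soon as it takes these generators there.  On them `α̃_p` is the monomial
`α(v) x^(p+q)`, a polynomial unless `p + q < 0` and `α(v) ≠ 0`.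
-/

theorem C_mul_T_mem_range_toLaurent_iff {R : Type*} [Semiring R] {a : R} {n : ℤ} :
    LaurentPolynomial.C a * T n ∈ Set.range (toLaurent : R[X] →+* R[T;T⁻¹]) ↔
      (n < 0 → a = 0) := by
  constructor
  · rintro ⟨f, hf⟩ hn
    by_contra ha
    have hn_mem : n ∈ (toLaurent f).coeff.support := by
      simp [hf, support_coeff_C_mul_T_of_ne_zero ha]
    rw [support_coeff_toLaurent] at hn_mem
    obtain ⟨m, -, rfl⟩ := Finset.mem_map.mp hn_mem
    exact hn.not_ge (Int.natCast_nonneg m)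
  · intro h
    obtain hn | hn := lt_or_ge n 0
    · exact ⟨0, by simp [h hn]⟩
    · lift n to ℕ using hn
      exact ⟨Polynomial.C a * X ^ n, toLaurent_C_mul_X_pow n a⟩

theorem forall_lt_le_iff_of_monotone {β : Type*} [Preorder β] {F : ℤ → β} (hF : Monotone F)
    {n : ℤ} {b : β} : (∀ q < n, F q ≤ b) ↔ F (n - 1) ≤ b where
  mp h := h (n - 1) (sub_one_lt n)
  mpr h _ hq := (hF (Int.le_sub_one_of_lt hq)).trans h

section ReesModule

variable {k V : Type*} [CommSemiring k] [AddCommMonoid V] [Module k V]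

/-- The Rees module of a `ℤ`-indexed family of submodules: the `k[x]`-span of the `x^q ⊗ v` with
`v ∈ F^q`, which for increasing `F` is `⊕_q x^q F^q` inside `k[x,x⁻¹] ⊗ V`. -/
noncomputable def reesModule (F : ℤ → Submodule k V) : Submodule k[X] (k[T;T⁻¹] ⊗[k] V) :=
  Submodule.span k[X] {w | ∃ q : ℤ, ∃ v ∈ F q, w = T q ⊗ₜ[k] v}

/-- The functional `α̃_p`, i.e. the `𝔾_m`-invariant section `x^p α` of the dual bundle over
`𝔸¹ ∖ {0}`, encoded as `x^p` times the base change of `α` to `k[x,x⁻¹]`. -/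
noncomputable def laurentDual (p : ℤ) (α : Module.Dual k V) :
    Module.Dual k[T;T⁻¹] (k[T;T⁻¹] ⊗[k] V) :=
  (T p : k[T;T⁻¹]) • Module.Dual.baseChange k[T;T⁻¹] α

theorem reesModule_le_iff {F : ℤ → Submodule k V} {N : Submodule k[X] (k[T;T⁻¹] ⊗[k] V)} :
    reesModule F ≤ N ↔ ∀ q, ∀ v ∈ F q, T q ⊗ₜ[k] v ∈ N := by
  rw [reesModule, Submodule.span_le]
  constructor
  · exact fun h q v hv => h ⟨q, v, hv, rfl⟩
  · rintro h _ ⟨q, v, hv, rfl⟩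
    exact h q v hv

theorem laurentDual_tmul (p : ℤ) (α : Module.Dual k V) (f : k[T;T⁻¹]) (v : V) :
    laurentDual p α (f ⊗ₜ[k] v) = T p * f * algebraMap k k[T;T⁻¹] (α v) := by
  rw [laurentDual, LinearMap.smul_apply, Module.Dual.baseChange_apply_tmul, smul_eq_mul,
    Algebra.smul_def, mul_assoc, mul_comm f]

theorem laurentDual_T_tmul (p q : ℤ) (α : Module.Dual k V) (v : V) :
    laurentDual p α (T q ⊗ₜ[k] v) = LaurentPolynomial.C (α v) * T (p + q) := by
  rw [laurentDual_tmul, ← T_add, LaurentPolynomial.C_eq_algebraMap, mul_comm]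

theorem eq_laurentDual_of_tmul {p : ℤ} {α : Module.Dual k V}
    {φ : Module.Dual k[T;T⁻¹] (k[T;T⁻¹] ⊗[k] V)}
    (hφ : ∀ f v, φ (f ⊗ₜ[k] v) = T p * f * algebraMap k k[T;T⁻¹] (α v)) :
    φ = laurentDual p α :=
  TensorProduct.AlgebraTensorModule.ext fun f v => by rw [hφ, laurentDual_tmul]

theorem forall_mem_reesModule_laurentDual_mem_range_iff (F : ℤ → Submodule k V) (p : ℤ)
    (α : Module.Dual k V) :
    (∀ w ∈ reesModule F, laurentDual p α w ∈ Set.range (toLaurent : k[X] →+* k[T;T⁻¹])) ↔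
      ∀ q < -p, F q ≤ LinearMap.ker α :=
  calc (∀ w ∈ reesModule F, laurentDual p α w ∈ Set.range (toLaurent : k[X] →+* k[T;T⁻¹]))
    _ ↔ reesModule F ≤ (LinearMap.range (Algebra.linearMap k[X] k[T;T⁻¹])).comap
          ((laurentDual p α).restrictScalars k[X]) := Iff.rfl
    _ ↔ ∀ q, ∀ v ∈ F q, laurentDual p α (T q ⊗ₜ[k] v) ∈
          Set.range (toLaurent : k[X] →+* k[T;T⁻¹]) := reesModule_le_iff
    _ ↔ ∀ q, ∀ v ∈ F q, p + q < 0 → α v = 0 := by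
        simp only [laurentDual_T_tmul, C_mul_T_mem_range_toLaurent_iff]
    _ ↔ ∀ q < -p, F q ≤ LinearMap.ker α := by
        simp only [← lt_neg_iff_add_neg']
        exact forall_congr' fun q => ⟨fun h hq v hv => h v hv hq, fun h v hv hq => h hq hv⟩

theorem rees_dual_filtration_field_general {F : ℤ → Submodule k V} (hF : Monotone F)
    (α : Module.Dual k V) (p : ℤ) :
    ((∀ w ∈ reesModule F, laurentDual p α w ∈ Set.range (toLaurent : k[X] →+* k[T;T⁻¹])) ↔
      ∀ q < -p, F q ≤ LinearMap.ker α) ∧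
    ((∀ w ∈ reesModule F, laurentDual p α w ∈ Set.range (toLaurent : k[X] →+* k[T;T⁻¹])) ↔
      α ∈ (F (-p - 1)).dualAnnihilator) := by
  have extends_iff := forall_mem_reesModule_laurentDual_mem_range_iff F p α
  have annihilates_iff : F (-p - 1) ≤ LinearMap.ker α ↔ α ∈ (F (-p - 1)).dualAnnihilator :=
    (Submodule.mem_dualAnnihilator α).symm
  exact ⟨extends_iff, extends_iff.trans ((forall_lt_le_iff_of_monotone hF).trans annihilates_iff)⟩

end ReesModule

/-- Let `k` be a field, `V` a finite-dimensional `k`-vector space and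
`(F q)_{q ∈ ℤ}` a monotone increasing family of subspaces of `V`.  Let
`W = k[x,x⁻¹] ⊗[k] V`, regarded as a `k[x]`-module, and let `Rees ⊆ W` be the
`k[x]`-submodule generated by the elements `x^q ⊗ v` with `v ∈ F q`.  For
`α ∈ V*` and `p ∈ ℤ`, let `αt : W → k[x,x⁻¹]` be the `k[x,x⁻¹]`-linear map
determined by `f ⊗ v ↦ x^p * f * α v`.  Then `αt` maps `Rees` into (the image of)
`k[x]` iff `α` annihilates `F q` for every `q < -p`; equivalently, iff `α` lies in
the dual annihilator of `F (-p-1)`. -/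
theorem rees_dual_filtration_field
    (k : Type*) [Field k] (V : Type*) [AddCommGroup V] [Module k V]
    [FiniteDimensional k V]
    (F : ℤ → Subspace k V) (hF : Monotone F)
    (α : Module.Dual k V) (p : ℤ)
    (αt : (LaurentPolynomial k ⊗[k] V) →ₗ[LaurentPolynomial k] LaurentPolynomial k)
    (hαt : ∀ (f : LaurentPolynomial k) (v : V),
      αt (f ⊗ₜ[k] v) = LaurentPolynomial.T p * f * algebraMap k (LaurentPolynomial k) (α v))
    (Rees : Submodule (Polynomial k) (LaurentPolynomial k ⊗[k] V))
    (hRees : Rees = Submodule.span (Polynomial k)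
      { w : LaurentPolynomial k ⊗[k] V |
        ∃ q : ℤ, ∃ v ∈ F q, w = LaurentPolynomial.T q ⊗ₜ[k] v }) :
    ((∀ w ∈ Rees, αt w ∈
        Set.range (Polynomial.toLaurent : Polynomial k →+* LaurentPolynomial k)) ↔
      (∀ q : ℤ, q < -p → F q ≤ LinearMap.ker α)) ∧
    ((∀ w ∈ Rees, αt w ∈
        Set.range (Polynomial.toLaurent : Polynomial k →+* LaurentPolynomial k)) ↔
      α ∈ Submodule.dualAnnihilator (F (-p - 1))) := by
  obtain rfl := eq_laurentDual_of_tmul hαt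
  exact hRees ▸ rees_dual_filtration_field_general hF α p
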